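/- Let d ≥ 1 and let x_1, …, x_N (N ≥ 1) be pairwise distinct points in ℝ^d. Let π_1, …, π_N be weights with π_j > 0 for all j and ∑_{j=1}^N π_j = 1. Fix an index j' and fix bandwidths σ_j > 0 for all j ≠ j'. Then the π-KDE total log-likelihood L(σ, π) = ∑_{i=1}^N log( ∑_{j=1}^N π_j · K_{σ_j}(x_i, x_j) ), viewed as a function of σ_{j'} alone, tends to +∞ as σ_{j'} → 0 from the right (within (0, ∞)). -/

import Mathlib

/-!
Monotonicity of the logarithm bounds each mixture density from below by the contribution of its own
kernel, so `L(σ, π) ≥ ∑ i, log (π_i K_{σ_i}(x_i, x_i))`. On the right-hand side `σ_{j'}` enters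
through the single term `log (π_{j'} (2πσ_{j'}²)^{-d/2})`, which blows up as `σ_{j'} → 0`.
-/

/-- The isotropic Gaussian kernel on `ℝ^d` with center `μ` and bandwidth `σ`:
`K_σ(x, μ) = (2πσ²)^{-d/2} · exp(−‖x − μ‖² / (2σ²))`. -/
noncomputable def gaussKernel (d : ℕ) (σ : ℝ) (x μ : EuclideanSpace ℝ (Fin d)) : ℝ :=
  (2 * Real.pi * σ ^ 2) ^ (-(d : ℝ) / 2) * Real.exp (-‖x - μ‖ ^ 2 / (2 * σ ^ 2))

open Filter Topology

section GaussKernel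

variable {d : ℕ} (x μ : EuclideanSpace ℝ (Fin d))

theorem gaussKernel_pos {σ : ℝ} (hσ : σ ≠ 0) : 0 < gaussKernel d σ x μ := by
  unfold gaussKernel
  positivity

theorem gaussKernel_self (σ : ℝ) :
    gaussKernel d σ x x = (2 * Real.pi * σ ^ 2) ^ (-(d : ℝ) / 2) := by
  simp [gaussKernel]

theorem tendsto_gaussKernel_self_atTop (hd : 1 ≤ d) :
    Tendsto (fun σ => gaussKernel d σ x x) (𝓝[≠] 0) atTop := by
  simp only [gaussKernel_self]
  have exponent_neg : -(d : ℝ) / 2 < 0 := by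
    have : (1 : ℝ) ≤ d := mod_cast hd
    linarith
  have base_tendsto : Tendsto (fun σ : ℝ => 2 * Real.pi * σ ^ 2) (𝓝 0) (𝓝 0) :=
    Continuous.tendsto' (by fun_prop) 0 0 (by simp)
  have base_pos : ∀ᶠ σ : ℝ in 𝓝[≠] 0, 2 * Real.pi * σ ^ 2 ∈ Set.Ioi 0 := by
    filter_upwards [self_mem_nhdsWithin] with σ (hσ : σ ≠ 0)
    exact Set.mem_Ioi.2 (by positivity)
  exact (tendsto_rpow_neg_nhdsGT_zero exponent_neg).comp
    (tendsto_nhdsWithin_iff.2 ⟨base_tendsto.mono_left nhdsWithin_le_nhds, base_pos⟩)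

end GaussKernel

theorem sum_log_diag_le_sum_log_sum {ι : Type*} [Fintype ι] {a : ι → ι → ℝ}
    (ha : ∀ i j, 0 ≤ a i j) (ha_diag : ∀ i, 0 < a i i) :
    ∑ i, Real.log (a i i) ≤ ∑ i, Real.log (∑ j, a i j) :=
  Finset.sum_le_sum fun i _ =>
    Real.log_le_log (ha_diag i) (Finset.single_le_sum (fun j _ => ha i j) (Finset.mem_univ i))

section LogLikelihood

variable {ι : Type*} [Fintype ι] {d : ℕ}

/-- The π-KDE total log-likelihood `L(σ, π)` of the data points `x`, with the weights `π` written
`w` and the data indexed by an arbitrary finite type. -/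
noncomputable def piKdeLogLikelihood (x : ι → EuclideanSpace ℝ (Fin d)) (w σ : ι → ℝ) : ℝ :=
  ∑ i, Real.log (∑ j, w j * gaussKernel d (σ j) (x i) (x j))

variable (x : ι → EuclideanSpace ℝ (Fin d)) {w σ : ι → ℝ}

theorem sum_log_gaussKernel_self_le_piKdeLogLikelihood (hw : ∀ j, 0 < w j) (hσ : ∀ j, σ j ≠ 0) :
    ∑ i, Real.log (w i * gaussKernel d (σ i) (x i) (x i)) ≤ piKdeLogLikelihood x w σ :=
  have term_pos i j : 0 < w j * gaussKernel d (σ j) (x i) (x j) :=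
    mul_pos (hw j) (gaussKernel_pos _ _ (hσ j))
  sum_log_diag_le_sum_log_sum (fun i j => (term_pos i j).le) fun i => term_pos i i

variable [DecidableEq ι]

theorem tendsto_sum_log_gaussKernel_self_update_atTop (hd : 1 ≤ d) (σ : ι → ℝ) {k : ι}
    (hwk : 0 < w k) :
    Tendsto (fun s => ∑ i, Real.log (w i * gaussKernel d (Function.update σ k s i) (x i) (x i)))
      (𝓝[≠] 0) atTop := by
  have collapsing_term : Tendsto (fun s => Real.log (w k * gaussKernel d s (x k) (x k)))
      (𝓝[≠] 0) atTop :=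
    Real.tendsto_log_atTop.comp ((tendsto_gaussKernel_self_atTop (x k) hd).const_mul_atTop hwk)
  simp only [Function.apply_update fun i s => Real.log (w i * gaussKernel d s (x i) (x i)),
    Finset.sum_update_of_mem (Finset.mem_univ k)]
  exact tendsto_atTop_add_const_right _ _ collapsing_term

theorem pikde_mll_tendsto_atTop_of_bandwidth_collapse_general (hd : 1 ≤ d) (hw : ∀ j, 0 < w j)
    {k : ι} (hσ : ∀ j, j ≠ k → σ j ≠ 0) :
    Tendsto (fun s => piKdeLogLikelihood x w (Function.update σ k s)) (𝓝[≠] 0) atTop := by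
  refine tendsto_atTop_mono' _ ?_
    (tendsto_sum_log_gaussKernel_self_update_atTop x hd σ (hw k))
  filter_upwards [self_mem_nhdsWithin] with s (hs : s ≠ 0)
  have update_ne_zero : ∀ j, Function.update σ k s j ≠ 0 :=
    (Function.forall_update_iff σ fun _ t => t ≠ 0).2 ⟨hs, hσ⟩
  exact sum_log_gaussKernel_self_le_piKdeLogLikelihood x hw update_ne_zero

end LogLikelihood

/-- If the data points are pairwise distinct, the weights are positive and sum to one, and
all bandwidths except the `j'`-th one are fixed and positive, the π-KDE total
log-likelihood tends to `+∞` as `σ_{j'} → 0⁺`. -/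
theorem pikde_mll_tendsto_atTop_of_bandwidth_collapse
    (d N : ℕ) (hd : 1 ≤ d) (hN : 1 ≤ N)
    (x : Fin N → EuclideanSpace ℝ (Fin d)) (hx : Function.Injective x)
    (w : Fin N → ℝ) (hw : ∀ j, 0 < w j) (hwsum : ∑ j, w j = 1)
    (j' : Fin N) (σ : Fin N → ℝ) (hσ : ∀ j, j ≠ j' → 0 < σ j) :
    Filter.Tendsto
      (fun s : ℝ => ∑ i, Real.log
        (∑ j, w j * gaussKernel d (if j = j' then s else σ j) (x i) (x j)))
      (nhdsWithin 0 (Set.Ioi 0)) Filter.atTop := by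
  simpa only [piKdeLogLikelihood, Function.update_apply] using
    (pikde_mll_tendsto_atTop_of_bandwidth_collapse_general x hd hw fun j hj =>
      (hσ j hj).ne').mono_left (nhdsGT_le_nhdsNE 0)
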